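/- A position M = (n_0, ..., n_7) in extended circular nim ECN(8_{1,2,3}, 6) is a P-position if and only if M is the all-zero position, or some cyclic rotation or reflection of M satisfies n_0 = n_2 = n_4 = n_6 = n_1 + n_3 + n_5 + n_7 but does not satisfy (n_0 = n_2 = n_4 = n_6 and n_1 = n_3 = n_5 = n_7). -/

import Mathlib

/-!
The six piles of an arithmetic progression with step `1` or `3` modulo `8` omit exactly one even
and one odd position, every such pair of omitted positions arises in this way, and step `2` covers
all positions of one parity. Writing `A` for the four even piles and `B` for the four odd ones, a
move therefore either leaves one of the two groups untouched or leaves at least one pile of each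
group untouched (`ecnMove_iff`). The claimed P-positions are the zero position and those where all
piles of one group equal the sum of the other, nonconstant, group (`Half`, `Good`, `cyc_iff`).

No move joins two such positions (`eq_of_good`). Suppose `A` is constant with value
`c = ∑ B`, with `B` nonconstant. Reaching zero, or the same shape with a smaller constant, requires
changing all of `A` and some of `B`. Reaching the shape with the groups exchanged would make `B`
constant with value `b' = ∑ A'`; as `∑ B = c` this forces every pile of `A'` to be below `c`, so
all of `A` changes, hence `B` does not, although it is nonconstant.

From every other position such a position can be reached (`exists_good`). By symmetry assume that
`M = min B` is at most `m = min A`. If `B` is constant, turn `A` into `(M, 0, 0, 0)`. If not and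
`∑ B ≤ m`, turn `A` into the constant `∑ B`. Otherwise turn `A` into the constant `m`, and reduce
`B` to a nonconstant vector of sum `m` while keeping a minimal pile.
-/

/-- `IsN move x`: `x` is an N-position (next player wins) for the game with
move relation `move` (least fixed point; correct for short games). -/
inductive IsN {α : Type*} (move : α → α → Prop) : α → Prop
  | intro (x y : α) (hxy : move x y) (hy : ∀ z, move y z → IsN move z) : IsN move x

/-- `IsP move x`: `x` is a P-position (previous player wins) under normal play. -/
def IsP {α : Type*} (move : α → α → Prop) (x : α) : Prop :=
  ∀ y, move x y → IsN move y

/-- Move relation of extended circular nim `ECN(m_S, k)`: reduce some piles,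
all lying among `k` piles taken every `s`-th pile (for some `s ∈ S`) starting
at some index `i`, removing at least one token in total. -/
def ecnMove (m : ℕ) (S : Set ℕ) (k : ℕ) (x y : Fin m → ℕ) : Prop :=
  y ≠ x ∧ (∀ j, y j ≤ x j) ∧
    ∃ s ∈ S, ∃ i : ℕ, ∀ j : Fin m, y j ≠ x j → ∃ t < k, (j : ℕ) = (i + t * s) % m

/-- `cyc m Q n` : some cyclic rotation of `n`, or of its reversal, satisfies `Q`
(the relation `M ∈_↻ P`). -/
def cyc (m : ℕ) (Q : (Fin m → ℕ) → Prop) (n : Fin m → ℕ) : Prop :=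
  ∃ r : ℕ,
    Q (fun j => n ⟨(j.1 + r) % m, Nat.mod_lt _ (Nat.lt_of_le_of_lt (Nat.zero_le _) j.isLt)⟩) ∨
    Q (fun j => n ⟨(r + (m - j.1)) % m, Nat.mod_lt _ (Nat.lt_of_le_of_lt (Nat.zero_le _) j.isLt)⟩)

theorem IsN.not_isP {α : Type*} {move : α → α → Prop} {x : α} (h : IsN move x) :
    ¬ IsP move x := by
  induction h with
  | intro x y hxy hy ih =>
    intro hP
    cases hP y hxy with
    | intro _ z hyz hz => exact ih z hyz hz

/-- In a terminating game, a set of positions is the set of P-positions if no move stays inside it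
and every position outside it has a move into it. -/
theorem isP_iff_of {α : Type*} {move : α → α → Prop} (μ : α → ℕ) (S : α → Prop)
    (hμ : ∀ x y, move x y → μ y < μ x)
    (h1 : ∀ x y, S x → move x y → ¬ S y)
    (h2 : ∀ x, ¬ S x → ∃ y, move x y ∧ S y) (x : α) : IsP move x ↔ S x := by
  have key : ∀ k x, μ x < k → (S x → IsP move x) ∧ (¬ S x → IsN move x) := by
    intro k
    induction k with
    | zero => intro x hx; omega
    | succ k ih =>
      intro x hx
      have hlt : ∀ y, move x y → μ y < k := fun y hy => by
        have := hμ x y hy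
        omega
      refine ⟨fun hS y hy => (ih y (hlt y hy)).2 (h1 x y hS hy), fun hS => ?_⟩
      obtain ⟨y, hy, hSy⟩ := h2 x hS
      exact IsN.intro x y hy ((ih y (hlt y hy)).1 hSy)
  have hk := key (μ x + 1) x (Nat.lt_succ_self _)
  refine ⟨fun hP => ?_, hk.1⟩
  by_contra hS
  exact (hk.2 hS).not_isP hP

/-! ### The game on two groups of four piles -/

/-- The piles at even positions. -/
def evens (x : Fin 8 → ℕ) : Fin 4 → ℕ := ![x 0, x 2, x 4, x 6]

/-- The piles at odd positions. -/
def odds (x : Fin 8 → ℕ) : Fin 4 → ℕ := ![x 1, x 3, x 5, x 7]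

/-- The position with even piles `A` and odd piles `B`. -/
def merge (A B : Fin 4 → ℕ) : Fin 8 → ℕ := ![A 0, B 0, A 1, B 1, A 2, B 2, A 3, B 3]

/-- The changes from `(A, B)` to `(A', B')` touch an admissible set of piles: one group is left
alone, or each group has an untouched pile. -/
def Legal (A B A' B' : Fin 4 → ℕ) : Prop :=
  A' = A ∨ B' = B ∨ ((∃ i, A' i = A i) ∧ ∃ j, B' j = B j)

/-- All piles of `A` equal the sum of the piles of `B`, and `B` is not constant. -/
def Half (A B : Fin 4 → ℕ) : Prop :=
  (∀ i, A i = ∑ j, B j) ∧ ∃ i j, B i ≠ B j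

/-- The claimed P-positions, in terms of the two groups. -/
def Good (A B : Fin 4 → ℕ) : Prop :=
  ((∀ i, A i = 0) ∧ ∀ i, B i = 0) ∨ Half A B ∨ Half B A

theorem Good.symm {A B : Fin 4 → ℕ} (h : Good A B) : Good B A := by
  unfold Good at *; tauto

theorem Legal.symm {A B A' B' : Fin 4 → ℕ} (h : Legal A B A' B') : Legal B A B' A' := by
  unfold Legal at *; tauto

/-- An admissible change from the shape `Half A B` that does not increase `B` and ends in a claimed
P-position is trivial. -/
theorem eq_of_half {A B A' B' : Fin 4 → ℕ} (hB : ∀ i, B' i ≤ B i)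
    (hL : Legal A B A' B') (h : Half A B) (h' : Good A' B') : A' = A ∧ B' = B := by
  obtain ⟨hs, i, j, hij⟩ := h
  have eqB : ∑ i, B' i = ∑ i, B i → B' = B := fun e =>
    funext fun i => (Finset.sum_eq_sum_iff_of_le fun i _ => hB i).1 e i (Finset.mem_univ i)
  -- An admissible change of every pile of `A` leaves `B` alone.
  have hall : (∀ i, A' i ≠ A i) → B' = B := by
    intro hne
    rcases hL with h | h | ⟨⟨k, hk⟩, -⟩
    · exact absurd (congrFun h 0) (hne 0)
    · exact h
    · exact absurd hk (hne k)
  have hpos : 0 < ∑ i, B i := by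
    have := Finset.single_le_sum (fun k _ => Nat.zero_le (B k)) (Finset.mem_univ i)
    have := Finset.single_le_sum (fun k _ => Nat.zero_le (B k)) (Finset.mem_univ j)
    omega
  rcases h' with ⟨hA0, hB0⟩ | ⟨hs', -⟩ | ⟨hs', -⟩
  · have hBB : B' = B := hall fun k => by rw [hA0, hs]; omega
    exact absurd (by rw [← hBB, hB0, hB0]) hij
  · have e : ∑ i, B' i = ∑ i, B i := by
      by_contra hne
      have hBB : B' = B := hall fun k => by rw [hs', hs]; exact hne
      exact hne (by rw [hBB])
    exact ⟨funext fun k => by rw [hs', hs, e], eqB e⟩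
  · have hBB : B' = B := hall fun k hk => by
      -- A pile of `A'` equal to `∑ B` would bound every pile of `B'` below by `∑ B`.
      have h1 := Finset.single_le_sum (fun k _ => Nat.zero_le (A' k)) (Finset.mem_univ k)
      have h2 : ∑ i, B' i ≤ ∑ i, B i := Finset.sum_le_sum fun i _ => hB i
      simp only [hs', Finset.sum_const, Finset.card_univ, Fintype.card_fin, smul_eq_mul] at h2
      have h3 := hs k
      omega
    exact absurd (by rw [← hBB, hs', hs']) hij

/-- Interpolation: every value between the sums of `L` and `U` is the sum of a vector between
`L` and `U`. -/
theorem exists_between_sum {ι : Type*} [Fintype ι] [DecidableEq ι] (L U : ι → ℕ)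
    (hLU : ∀ i, L i ≤ U i) (t : ℕ) (h1 : ∑ i, L i ≤ t) (h2 : t ≤ ∑ i, U i) :
    ∃ g : ι → ℕ, (∀ i, L i ≤ g i) ∧ (∀ i, g i ≤ U i) ∧ ∑ i, g i = t := by
  induction t, h1 using Nat.le_induction with
  | base => exact ⟨L, fun _ => le_rfl, hLU, rfl⟩
  | succ t ht ih =>
    obtain ⟨g, hLg, hgU, hg⟩ := ih (by omega)
    obtain ⟨k, -, hk⟩ : ∃ k ∈ Finset.univ, g k < U k :=
      Finset.exists_lt_of_sum_lt (by omega)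
    refine ⟨g + Pi.single k 1, fun i => (hLg i).trans (by simp), fun i => ?_, ?_⟩
    · by_cases hi : i = k
      · subst hi; simpa using hk
      · simpa [hi] using hgU i
    · simp [Finset.sum_add_distrib, hg]

/-- If the overall minimum is attained in `B`, some claimed P-position is reachable by an
admissible (possibly trivial) change. -/
theorem exists_good_of_le {A B : Fin 4 → ℕ} {a b : Fin 4} (ha : ∀ i, A a ≤ A i)
    (hb : ∀ i, B b ≤ B i) (hba : B b ≤ A a) :
    ∃ A' B', (∀ i, A' i ≤ A i) ∧ (∀ i, B' i ≤ B i) ∧ Legal A B A' B' ∧ Good A' B' := by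
  by_cases hc : ∀ j, B j = B b
  · refine ⟨Pi.single 0 (B b), B, fun i => ?_, fun _ => le_rfl, Or.inr (Or.inl rfl), ?_⟩
    · have := ha i
      by_cases hi : i = 0
      · subst hi; simp; omega
      · simp [hi]
    · by_cases h0 : B b = 0
      · exact Or.inl ⟨fun i => by simp [h0], fun i => by rw [hc, h0]⟩
      · exact Or.inr (Or.inr ⟨fun i => by simp [hc i], 0, 1, by simpa using h0⟩)
  push Not at hc
  obtain ⟨j, hj⟩ := hc
  by_cases hs : ∑ i, B i ≤ A a
  · exact ⟨fun _ => ∑ i, B i, B, fun i => hs.trans (ha i), fun _ => le_rfl, Or.inr (Or.inl rfl),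
      Or.inr (Or.inl ⟨fun _ => rfl, j, b, hj⟩)⟩
  have hjb : j ≠ b := fun h => hj (by rw [h])
  have hlt : B b + 1 ≤ B j := lt_of_le_of_ne (hb j) (Ne.symm hj)
  -- The lower bound keeps pile `b` and, unless the target sum is too small, forces pile `j`
  -- above it, so that the interpolating vector cannot be constant.
  obtain ⟨g, hLg, hgU, hg⟩ := exists_between_sum
    (Pi.single b (B b) + Pi.single j (min (B b + 1) (A a - B b))) B
    (fun i => by
      by_cases h1 : i = b
      · subst h1; simp [Ne.symm hjb]
      · by_cases h2 : i = j
        · subst h2; simp [h1]; omega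
        · simp [h1, h2]) (A a)
    (by simp [Finset.sum_add_distrib]; omega) (by omega)
  have hgb : g b = B b := by
    have := hLg b
    simp [Ne.symm hjb] at this
    exact le_antisymm (hgU b) this
  have hgj : min (B b + 1) (A a - B b) ≤ g j := by
    have := hLg j
    simpa [hjb] using this
  refine ⟨fun _ => A a, g, ha, hgU, Or.inr (Or.inr ⟨⟨a, rfl⟩, b, hgb⟩), ?_⟩
  by_cases hm : A a = 0
  · refine Or.inl ⟨fun _ => hm, fun i => ?_⟩
    rw [hm, Finset.sum_eq_zero_iff] at hg
    exact hg i (Finset.mem_univ i)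
  · refine Or.inr (Or.inl ⟨fun _ => hg.symm, ?_⟩)
    by_contra hcon
    push Not at hcon
    have h4 : ∑ i, g i = 4 * B b := by
      rw [Finset.sum_congr rfl (fun i _ => (hcon i b).trans hgb)]
      simp
    have := hcon j b
    omega

theorem exists_good (A B : Fin 4 → ℕ) :
    ∃ A' B', (∀ i, A' i ≤ A i) ∧ (∀ i, B' i ≤ B i) ∧ Legal A B A' B' ∧ Good A' B' := by
  obtain ⟨a, ha⟩ := Finite.exists_min A
  obtain ⟨b, hb⟩ := Finite.exists_min B
  rcases le_total (B b) (A a) with h | h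
  · exact exists_good_of_le ha hb h
  · obtain ⟨B', A', h1, h2, h3, h4⟩ := exists_good_of_le hb ha h
    exact ⟨A', B', h2, h1, h3.symm, h4.symm⟩

/-- An admissible decrease between two claimed P-positions is trivial. -/
theorem eq_of_good {A B A' B' : Fin 4 → ℕ} (hA : ∀ i, A' i ≤ A i) (hB : ∀ i, B' i ≤ B i)
    (hL : Legal A B A' B') (h : Good A B) (h' : Good A' B') : A' = A ∧ B' = B := by
  rcases h with ⟨h1, h2⟩ | h | h
  · constructor <;> funext i
    · have := hA i
      have := h1 i
      omega
    · have := hB i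
      have := h2 i
      omega
  · exact eq_of_half hB hL h h'
  · exact (eq_of_half hA hL.symm h h'.symm).symm

/-! ### Translation to circular positions -/

theorem merge_evens_odds (x : Fin 8 → ℕ) : merge (evens x) (odds x) = x := by
  funext i; fin_cases i <;> rfl

theorem evens_merge (A B : Fin 4 → ℕ) : evens (merge A B) = A := by
  funext i; fin_cases i <;> rfl

theorem odds_merge (A B : Fin 4 → ℕ) : odds (merge A B) = B := by
  funext i; fin_cases i <;> rfl

theorem evens_apply (x : Fin 8 → ℕ) (i : Fin 4) : evens x i = x ⟨2 * i, by omega⟩ := by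
  fin_cases i <;> rfl

theorem odds_apply (x : Fin 8 → ℕ) (i : Fin 4) : odds x i = x ⟨2 * i + 1, by omega⟩ := by
  fin_cases i <;> rfl

/-- A progression of step `1` or `3` omits an even and an odd position. -/
theorem exists_omitted : ∀ i < 8, ∀ s ∈ [1, 3], ∃ a b : Fin 4,
    (∀ t < 6, 2 * (a : ℕ) ≠ (i + t * s) % 8) ∧ ∀ t < 6, 2 * (b : ℕ) + 1 ≠ (i + t * s) % 8 := by
  decide

/-- Every pair of an even and an odd position is omitted by a progression of step `1` or `3`
covering all other positions. -/
theorem exists_progression : ∀ a b : Fin 4, ∃ s ∈ [1, 3], ∃ i < 8, ∀ j : Fin 8,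
    (j : ℕ) ≠ 2 * (a : ℕ) → (j : ℕ) ≠ 2 * (b : ℕ) + 1 → ∃ t < 6, (j : ℕ) = (i + t * s) % 8 := by
  decide

theorem ecnMove_iff (x y : Fin 8 → ℕ) :
    ecnMove 8 {1, 2, 3} 6 x y ↔ y ≠ x ∧ (∀ j, y j ≤ x j) ∧
      Legal (evens x) (odds x) (evens y) (odds y) := by
  unfold ecnMove
  refine and_congr_right fun _ => and_congr_right fun _ => ⟨?_, ?_⟩
  · rintro ⟨s, hs, i, h⟩
    have hs2 : s = 2 ∨ s ∈ [1, 3] := by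
      simp only [Set.mem_insert_iff, Set.mem_singleton_iff] at hs
      simp only [List.mem_cons, List.not_mem_nil]
      tauto
    rcases hs2 with rfl | hs2
    · rcases Nat.mod_two_eq_zero_or_one i with hi | hi
      · right; left
        funext j
        rw [odds_apply, odds_apply]
        by_contra hne
        obtain ⟨t, _, ht⟩ := h _ hne
        simp only at ht
        omega
      · left
        funext j
        rw [evens_apply, evens_apply]
        by_contra hne
        obtain ⟨t, _, ht⟩ := h _ hne
        simp only at ht
        omega
    · obtain ⟨a, b, ha, hb⟩ := exists_omitted (i % 8) (Nat.mod_lt _ (by norm_num)) s hs2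
      refine Or.inr (Or.inr ⟨⟨a, ?_⟩, b, ?_⟩)
      · rw [evens_apply, evens_apply]
        by_contra hne
        obtain ⟨t, ht6, ht⟩ := h _ hne
        exact ha t ht6 (by rw [Nat.mod_add_mod]; exact ht)
      · rw [odds_apply, odds_apply]
        by_contra hne
        obtain ⟨t, ht6, ht⟩ := h _ hne
        exact hb t ht6 (by rw [Nat.mod_add_mod]; exact ht)
  · rintro (h | h | ⟨⟨a, ha⟩, b, hb⟩)
    · refine ⟨2, by simp, 1, fun j hj => ?_⟩
      have hodd : (j : ℕ) % 2 = 1 := by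
        by_contra hp
        have h2 := congrFun h ⟨j / 2, by omega⟩
        rw [evens_apply, evens_apply] at h2
        have e : (⟨2 * (j / 2), by omega⟩ : Fin 8) = j := by ext; simp only; omega
        exact hj (by simpa only [e] using h2)
      exact ⟨j / 2, by omega, by omega⟩
    · refine ⟨2, by simp, 0, fun j hj => ?_⟩
      have heven : (j : ℕ) % 2 = 0 := by
        by_contra hp
        have h2 := congrFun h ⟨j / 2, by omega⟩
        rw [odds_apply, odds_apply] at h2
        have e : (⟨2 * (j / 2) + 1, by omega⟩ : Fin 8) = j := by ext; simp only; omega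
        exact hj (by simpa only [e] using h2)
      exact ⟨j / 2, by omega, by omega⟩
    · obtain ⟨s, hs, i, _, h⟩ := exists_progression a b
      refine ⟨s, ?_, i, fun j hj => h j ?_ ?_⟩
      · simp only [List.mem_cons, List.not_mem_nil] at hs
        simp only [Set.mem_insert_iff, Set.mem_singleton_iff]
        tauto
      · intro e
        rw [evens_apply, evens_apply] at ha
        have e' : (⟨2 * a, by omega⟩ : Fin 8) = j := by ext; simp only; omega
        exact hj (by simpa only [e'] using ha)
      · intro e
        rw [odds_apply, odds_apply] at hb
        have e' : (⟨2 * b + 1, by omega⟩ : Fin 8) = j := by ext; simp only; omega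
        exact hj (by simpa only [e'] using hb)

theorem half_iff (x0 x1 x2 x3 x4 x5 x6 x7 : ℕ) :
    Half ![x0, x2, x4, x6] ![x1, x3, x5, x7] ↔
      (x0 = x2 ∧ x2 = x4 ∧ x4 = x6 ∧ x6 = x1 + x3 + x5 + x7) ∧
        ¬((x0 = x2 ∧ x2 = x4 ∧ x4 = x6) ∧ (x1 = x3 ∧ x3 = x5 ∧ x5 = x7)) := by
  simp [Half, Fin.forall_fin_succ, Fin.exists_fin_succ, Fin.sum_univ_succ]
  omega

/-- The condition is invariant under the symmetries of each group, so rotations and reflections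
matter only through whether they exchange the two groups. -/
theorem cyc_iff (n : Fin 8 → ℕ) :
    cyc 8 (fun x =>
        (x 0 = x 2 ∧ x 2 = x 4 ∧ x 4 = x 6 ∧ x 6 = x 1 + x 3 + x 5 + x 7) ∧
        ¬((x 0 = x 2 ∧ x 2 = x 4 ∧ x 4 = x 6) ∧
          (x 1 = x 3 ∧ x 3 = x 5 ∧ x 5 = x 7))) n ↔
      Half (evens n) (odds n) ∨ Half (odds n) (evens n) := by
  simp only [evens, odds, half_iff]
  constructor
  · rintro ⟨r, h⟩
    obtain ⟨k, hk⟩ : ∃ k : Fin 8, r % 8 = k := ⟨⟨r % 8, Nat.mod_lt _ (by norm_num)⟩, rfl⟩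
    have k1 : ∀ j : Fin 8, (j.1 + r) % 8 = (j.1 + k.1) % 8 := fun j => by omega
    have k2 : ∀ j : Fin 8, (r + (8 - j.1)) % 8 = (k.1 + (8 - j.1)) % 8 := fun j => by omega
    simp only [k1, k2] at h
    fin_cases k <;> simp at h <;> omega
  · rintro (h | h)
    · exact ⟨0, Or.inl h⟩
    · refine ⟨1, Or.inl ?_⟩
      simp
      omega

theorem ecn8_123_6_P_iff (n : Fin 8 → ℕ) :
    IsP (ecnMove 8 {1, 2, 3} 6) n ↔
      (∀ i, n i = 0) ∨
      cyc 8 (fun x =>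
        (x 0 = x 2 ∧ x 2 = x 4 ∧ x 4 = x 6 ∧ x 6 = x 1 + x 3 + x 5 + x 7) ∧
        ¬((x 0 = x 2 ∧ x 2 = x 4 ∧ x 4 = x 6) ∧
          (x 1 = x 3 ∧ x 3 = x 5 ∧ x 5 = x 7))) n := by
  have h0 : (∀ i, n i = 0) ↔ (∀ i, evens n i = 0) ∧ ∀ i, odds n i = 0 := by
    simp [evens, odds, Fin.forall_fin_succ]
    tauto
  rw [cyc_iff, h0]
  refine isP_iff_of (fun x => ∑ i, x i) (fun x => Good (evens x) (odds x)) ?_ ?_ ?_ n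
  · rintro x y ⟨hne, hle, -⟩
    obtain ⟨i, hi⟩ := Function.ne_iff.1 hne
    exact Finset.sum_lt_sum (fun j _ => hle j) ⟨i, Finset.mem_univ i, lt_of_le_of_ne (hle i) hi⟩
  · intro x y hx hxy hy
    rw [ecnMove_iff] at hxy
    obtain ⟨hne, hle, hL⟩ := hxy
    obtain ⟨hA, hB⟩ := eq_of_good
      (fun i => by rw [evens_apply, evens_apply]; exact hle _)
      (fun i => by rw [odds_apply, odds_apply]; exact hle _) hL hx hy
    exact hne (by rw [← merge_evens_odds y, hA, hB, merge_evens_odds])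
  · intro x hx
    obtain ⟨A', B', hA, hB, hL, hG⟩ := exists_good (evens x) (odds x)
    refine ⟨merge A' B', (ecnMove_iff _ _).2 ⟨?_, ?_, ?_⟩, ?_⟩
    · rintro rfl
      rw [evens_merge, odds_merge] at hx
      exact hx hG
    · intro j
      rw [← merge_evens_odds x]
      fin_cases j
      exacts [hA 0, hB 0, hA 1, hB 1, hA 2, hB 2, hA 3, hB 3]
    · rwa [evens_merge, odds_merge]
    · simpa only [evens_merge, odds_merge] using hG
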